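/- arXiv:2501.14545 — 2 statements merged into one kernel-verified Lean document; each statement's English description precedes it below -/
import Mathlib

section
/- Let b > 0 and let y be a real number with |y| < b. Then the Fourier transform of the function h_{y,b}(t) := cosh(2πyt)/cosh(2πbt), namely ĥ_{y,b}(x) := ∫_{−∞}^{∞} e^{−2πi x t} (cosh(2πyt)/cosh(2πbt)) dt, equals (1/b) · (cos(πy/(2b)) cosh(πx/(2b))) / (cos(πy/b) + cosh(πx/b)) for every real x, and this value is strictly positive. -/
open Filter Topology MeasureTheory Set

lemma aux_pt (u : ℂ) (s : ℝ) :
    |Real.sigmoid s * (1 - Real.sigmoid s)| •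
      (((Real.sigmoid s : ℝ) : ℂ) ^ (u - 1) * (1 - ((Real.sigmoid s : ℝ) : ℂ)) ^ ((1 - u) - 1))
      = Complex.exp (u * s) / (1 + Complex.exp s) := by
  have hp := Real.sigmoid_pos s
  have hq : 0 < 1 - Real.sigmoid s := by linarith [Real.sigmoid_lt_one s]
  have hqe : 1 - Real.sigmoid s = (1 + Real.exp s)⁻¹ := by
    rw [← Real.sigmoid_neg, Real.sigmoid_def, neg_neg]
  have hpq : Real.sigmoid s = (1 - Real.sigmoid s) * Real.exp s := by
    rw [← Real.sigmoid_neg, ← Real.sigmoid_mul_rexp_neg, mul_assoc, ← Real.exp_add]; simp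
  rw [abs_of_pos (mul_pos hp hq)]
  obtain ⟨L, hL⟩ : ∃ L, Real.exp L = 1 - Real.sigmoid s := ⟨_, Real.exp_log hq⟩
  have hσ : Real.sigmoid s = Real.exp (L + s) := by rw [Real.exp_add, hL]; exact hpq
  have h1 : (1 - ((Real.sigmoid s : ℝ) : ℂ)) = ((Real.exp L : ℝ) : ℂ) := by rw [hL]; push_cast; rfl
  have h2 : (1 + Complex.exp s)⁻¹ = Complex.exp L := by
    rw [← Complex.ofReal_exp L, hL, hqe]; push_cast; rfl
  rw [h1, ← hL, hσ, div_eq_mul_inv, h2,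
    Complex.cpow_def_of_ne_zero (by exact_mod_cast (Real.exp_pos _).ne'),
    Complex.cpow_def_of_ne_zero (by exact_mod_cast (Real.exp_pos _).ne'),
    ← Complex.ofReal_log (Real.exp_pos _).le, ← Complex.ofReal_log (Real.exp_pos _).le,
    Real.log_exp, Real.log_exp, Complex.real_smul]
  push_cast
  simp only [← Complex.exp_add]
  congr 1
  ring

lemma aux_int (u : ℂ) (h0 : 0 < u.re) (h1 : u.re < 1) :
    Integrable (fun s : ℝ => Complex.exp (u * s) / (1 + Complex.exp s)) ∧
    ∫ s : ℝ, Complex.exp (u * s) / (1 + Complex.exp s) = Real.pi / Complex.sin (Real.pi * u) := by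
  have hv : 0 < (1 - u).re := by simpa using h1
  have hd : ∀ s ∈ (univ : Set ℝ), HasDerivWithinAt Real.sigmoid
    (Real.sigmoid s * (1 - Real.sigmoid s)) univ s :=
    fun s _ => (Real.hasDerivAt_sigmoid s).hasDerivWithinAt
  have hi : InjOn Real.sigmoid univ := Real.sigmoid_injective.injOn
  have A := Complex.betaIntegral_convergent h0 hv
  have B := Complex.Gamma_mul_Gamma_eq_betaIntegral h0 hv
  rw [Complex.Gamma_mul_Gamma_one_sub, add_sub_cancel, Complex.Gamma_one, one_mul,
    Complex.betaIntegral, intervalIntegral.integral_of_le zero_le_one,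
    integral_Ioc_eq_integral_Ioo, ← Real.range_sigmoid, ← image_univ,
    integral_image_eq_integral_abs_deriv_smul MeasurableSet.univ hd hi] at B
  rw [intervalIntegrable_iff_integrableOn_Ioo_of_le zero_le_one, ← Real.range_sigmoid,
    ← image_univ,
    integrableOn_image_iff_integrableOn_abs_deriv_smul MeasurableSet.univ hd hi] at A
  simp only [aux_pt, integrableOn_univ, Measure.restrict_univ] at A B
  exact ⟨A, B.symm⟩

lemma aux_cos_pos (A : ℝ) (h : |A| < Real.pi / 2) (B : ℝ) :
    0 < Real.cos (2 * A) + Real.cosh (2 * B) := by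
  have hc := Real.cos_pos_of_mem_Ioo (abs_lt.mp h)
  have := Real.one_le_cosh (2 * B)
  rw [Real.cos_two_mul]
  nlinarith

theorem fourier_cosh_ratio (b y : ℝ) (hb : 0 < b) (hy : |y| < b) (x : ℝ) :
    (∫ t : ℝ, Complex.exp (-(2 * Real.pi * Complex.I * x * t)) *
        ((Real.cosh (2 * Real.pi * y * t) / Real.cosh (2 * Real.pi * b * t) : ℝ) : ℂ))
      = (((1 / b) * (Real.cos (Real.pi * y / (2 * b)) * Real.cosh (Real.pi * x / (2 * b))) /
          (Real.cos (Real.pi * y / b) + Real.cosh (Real.pi * x / b)) : ℝ) : ℂ) ∧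
    0 < (1 / b) * (Real.cos (Real.pi * y / (2 * b)) * Real.cosh (Real.pi * x / (2 * b))) /
          (Real.cos (Real.pi * y / b) + Real.cosh (Real.pi * x / b)) := by
  have hpi := Real.pi_pos
  obtain ⟨A, hA⟩ : ∃ A, A = Real.pi * y / (2 * b) := ⟨_, rfl⟩
  obtain ⟨B, hB⟩ : ∃ B, B = Real.pi * x / (2 * b) := ⟨_, rfl⟩
  have hA2 : Real.pi * y / b = 2 * A := by rw [hA]; field_simp
  have hB2 : Real.pi * x / b = 2 * B := by rw [hB]; field_simp
  have hAb : |A| < Real.pi / 2 := by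
    rw [hA, abs_div, abs_mul, abs_of_pos hpi, abs_of_pos (by positivity : 0 < 2 * b),
      div_lt_div_iff₀ (by positivity) (by positivity)]
    nlinarith
  have hcA := Real.cos_pos_of_mem_Ioo (abs_lt.mp hAb)
  have hden := aux_cos_pos A hAb B
  rw [hA2, hB2, ← hA, ← hB]
  refine ⟨?_, by have := Real.cosh_pos B; positivity⟩
  obtain ⟨hy1, hy2⟩ := abs_lt.mp hy
  have hyb1 : y / (2 * b) < 1 / 2 := by rw [div_lt_div_iff₀ (by positivity) (by positivity)]; linarith
  have hyb2 : -(1 / 2) < y / (2 * b) := by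
    rw [neg_lt, ← neg_div, div_lt_div_iff₀ (by positivity) (by positivity)]; linarith
  have key : ∀ e : ℝ, -(1 / 2) < e → e < 1 / 2 →
      Integrable (fun t : ℝ => Complex.exp ((1 / 2 + e - (x / (2 * b) : ℝ) * Complex.I) * ((4 * Real.pi * b * t : ℝ) : ℂ)) / (1 + Complex.exp ((4 * Real.pi * b * t : ℝ) : ℂ))) ∧
      ∫ t : ℝ, Complex.exp ((1 / 2 + e - (x / (2 * b) : ℝ) * Complex.I) * ((4 * Real.pi * b * t : ℝ) : ℂ)) / (1 + Complex.exp ((4 * Real.pi * b * t : ℝ) : ℂ))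
       = 1 / (4 * b) / Complex.cos (Real.pi * e - B * Complex.I) := by
    intro e he1 he2
    have hre : (1 / 2 + e - (x / (2 * b) : ℝ) * Complex.I : ℂ).re = 1 / 2 + e := by
      have : (1 / 2 + e - (x / (2 * b) : ℝ) * Complex.I : ℂ) = ((1 / 2 + e : ℝ) : ℂ) - (x / (2 * b) : ℝ) * Complex.I := by push_cast; ring
      rw [this, Complex.sub_re, Complex.ofReal_re, Complex.re_ofReal_mul, Complex.I_re]; ring
    obtain ⟨h1, h2⟩ := aux_int (1 / 2 + e - (x / (2 * b) : ℝ) * Complex.I) (by rw [hre]; linarith) (by rw [hre]; linarith)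
    refine ⟨h1.comp_mul_left' (R := 4 * Real.pi * b) (by positivity), ?_⟩
    rw [Measure.integral_comp_mul_left (fun s : ℝ => Complex.exp ((1 / 2 + e - (x / (2 * b) : ℝ) * Complex.I) * (s : ℂ)) / (1 + Complex.exp (s : ℂ))) (4 * Real.pi * b), h2,
      abs_of_pos (by positivity), Complex.real_smul]
    have hs : (Real.pi * (1 / 2 + e - (x / (2 * b) : ℝ) * Complex.I) : ℂ) = (Real.pi * e - B * Complex.I) + Real.pi / 2 := by
      rw [hB]; push_cast; ring
    rw [hs, Complex.sin_add_pi_div_two]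
    have : (Real.pi : ℂ) ≠ 0 := by exact_mod_cast hpi.ne'
    have : (b : ℂ) ≠ 0 := by exact_mod_cast hb.ne'
    push_cast
    field_simp
  obtain ⟨i1, v1⟩ := key (y / (2 * b)) hyb2 hyb1
  obtain ⟨i2, v2⟩ := key (-(y / (2 * b))) (by linarith) (by linarith)
  have hbC : (b : ℂ) ≠ 0 := by exact_mod_cast hb.ne'
  have hint : ∀ t : ℝ, Complex.exp (-(2 * Real.pi * Complex.I * x * t)) *
        ((Real.cosh (2 * Real.pi * y * t) / Real.cosh (2 * Real.pi * b * t) : ℝ) : ℂ) =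
      Complex.exp ((1 / 2 + (y / (2 * b) : ℝ) - (x / (2 * b) : ℝ) * Complex.I) * ((4 * Real.pi * b * t : ℝ) : ℂ)) / (1 + Complex.exp ((4 * Real.pi * b * t : ℝ) : ℂ)) +
      Complex.exp ((1 / 2 + (-(y / (2 * b)) : ℝ) - (x / (2 * b) : ℝ) * Complex.I) * ((4 * Real.pi * b * t : ℝ) : ℂ)) / (1 + Complex.exp ((4 * Real.pi * b * t : ℝ) : ℂ)) := by
    intro t
    have e1 : ((1 / 2 + (y / (2 * b) : ℝ) - (x / (2 * b) : ℝ) * Complex.I) * ((4 * Real.pi * b * t : ℝ) : ℂ)) = 2 * Real.pi * b * t + 2 * Real.pi * y * t + -(2 * Real.pi * Complex.I * x * t) := by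
      push_cast; field_simp; ring
    have e2 : ((1 / 2 + (-(y / (2 * b)) : ℝ) - (x / (2 * b) : ℝ) * Complex.I) * ((4 * Real.pi * b * t : ℝ) : ℂ)) = 2 * Real.pi * b * t + -(2 * Real.pi * y * t) + -(2 * Real.pi * Complex.I * x * t) := by
      push_cast; field_simp; ring
    have e3 : ((4 * Real.pi * b * t : ℝ) : ℂ) = 2 * Real.pi * b * t + 2 * Real.pi * b * t := by
      push_cast; ring
    have hc : Complex.cosh (2 * Real.pi * b * t) ≠ 0 := by
      have := (Real.cosh_pos (2 * Real.pi * b * t)).ne'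
      exact_mod_cast this
    have hc' : 1 + Complex.exp (2 * Real.pi * b * t + 2 * Real.pi * b * t) = 2 * Complex.exp (2 * Real.pi * b * t) * Complex.cosh (2 * Real.pi * b * t) := by
      rw [Complex.cosh, Complex.exp_add, Complex.exp_neg]
      field_simp [Complex.exp_ne_zero]
      ring
    rw [e1, e2, e3, hc', Complex.exp_add, Complex.exp_add, Complex.exp_add _ (-(2 * Real.pi * Complex.I * x * t)), Complex.exp_add _ (-(2 * Real.pi * y * t) : ℂ)]
    push_cast
    have := Complex.exp_ne_zero (2 * Real.pi * b * t)
    have hcy : Complex.cosh (2 * Real.pi * y * t) = (Complex.exp (2 * Real.pi * y * t) + Complex.exp (-(2 * Real.pi * y * t))) / 2 := rfl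
    rw [hcy]
    field_simp
  simp_rw [hint]
  rw [integral_add i1 i2, v1, v2]
  have a1 : (Real.pi * ((y / (2 * b) : ℝ) : ℂ) - B * Complex.I) = A - B * Complex.I := by
    rw [hA]; push_cast; ring
  have a2 : (Real.pi * ((-(y / (2 * b)) : ℝ) : ℂ) - B * Complex.I) = -(A + B * Complex.I) := by
    rw [hA]; push_cast; ring
  have a3 : Complex.cos (A - B * Complex.I) = Complex.cos A * Complex.cosh B + Complex.sin A * Complex.sinh B * Complex.I := by
    rw [Complex.cos_sub, Complex.cos_mul_I, Complex.sin_mul_I]; ring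
  rw [a1, a2, Complex.cos_neg, Complex.cos_add_mul_I, a3]
  have hprod : (Complex.cos A * Complex.cosh B + Complex.sin A * Complex.sinh B * Complex.I) *
      (Complex.cos A * Complex.cosh B - Complex.sin A * Complex.sinh B * Complex.I) =
      (Complex.cos (2 * A) + Complex.cosh (2 * B)) / 2 := by
    rw [Complex.cos_two_mul, Complex.cosh_two_mul]
    have h1 := Complex.sin_sq_add_cos_sq A
    have h2 := Complex.cosh_sq B
    have h3 : Complex.sin A ^ 2 = 1 - Complex.cos A ^ 2 := by linear_combination h1
    ring_nf
    rw [Complex.I_sq, h3, h2]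
    ring
  have hdC : Complex.cos (2 * A) + Complex.cosh (2 * B) ≠ 0 := by exact_mod_cast hden.ne'
  have hne := hprod ▸ div_ne_zero hdC (two_ne_zero)
  have n1 := left_ne_zero_of_mul hne
  have n2 := right_ne_zero_of_mul hne
  push_cast
  rw [div_add_div _ _ n1 n2, hprod]
  field_simp
  ring
end

section
/- Fix b > 0 and define K_b(z) := (1/(2π)) ∫_{−1}^{1} (j_F(α)/cosh(bα)) e^{izα} dα for z ∈ ℂ, where j_F(α) := max{1 − |α|, 0} is the Fejér kernel. Then for all real x and y with |y| < b, one has Re K_b(x + iy) > 0. -/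
open Filter Topology MeasureTheory Set

/-- The Fejér kernel `j_F(α) = max{1 - |α|, 0}`. -/
noncomputable def jF (α : ℝ) : ℝ := max (1 - |α|) 0

/-- The Tsang kernel `K_b(z) = (1/(2π)) ∫_{-1}^{1} (j_F(α)/cosh(bα)) e^{izα} dα`. -/
noncomputable def Kb (b : ℝ) (z : ℂ) : ℂ :=
  (1 / (2 * Real.pi)) * ∫ α in (-1 : ℝ)..1,
    ((jF α / Real.cosh (b * α) : ℝ) : ℂ) * Complex.exp (Complex.I * z * α)

lemma jF_cont : Continuous jF := by unfold jF; fun_prop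

lemma jF_nonneg (α : ℝ) : 0 ≤ jF α := le_max_right _ _

lemma jF_le_one (α : ℝ) : jF α ≤ 1 := by
  unfold jF
  exact max_le (by linarith [abs_nonneg α]) zero_le_one

lemma jF_neg (α : ℝ) : jF (-α) = jF α := by simp [jF]

lemma w_cont (b : ℝ) : Continuous fun α : ℝ => jF α / Real.cosh (b * α) := by
  refine jF_cont.div (by fun_prop) fun α => (Real.cosh_pos _).ne'

lemma w_norm (b α : ℝ) : ‖((jF α / Real.cosh (b * α) : ℝ) : ℂ)‖ ≤ 1 := by
  rw [Complex.norm_real, Real.norm_eq_abs,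
    abs_of_nonneg (div_nonneg (jF_nonneg _) (Real.cosh_pos _).le)]
  exact div_le_one_of_le₀ ((jF_le_one α).trans (Real.one_le_cosh _)) (Real.cosh_pos _).le

lemma integrand_cont (b : ℝ) (z : ℂ) : Continuous fun α : ℝ =>
    ((jF α / Real.cosh (b * α) : ℝ) : ℂ) * Complex.exp (Complex.I * z * α) :=
  (Complex.continuous_ofReal.comp (w_cont b)).mul (by fun_prop)

lemma exp_norm_le (z : ℂ) (B : ℝ) (hB : |z.im| ≤ B) (α : ℝ) (hα : α ∈ Set.uIoc (-1 : ℝ) 1) :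
    ‖Complex.exp (Complex.I * z * α)‖ ≤ Real.exp B := by
  rw [Complex.norm_exp]
  apply Real.exp_le_exp.2
  rw [Set.uIoc_of_le (by norm_num)] at hα
  have h1 : |α| ≤ 1 := abs_le.2 ⟨hα.1.le, hα.2⟩
  have : (Complex.I * z * α).re = -(z.im * α) := by simp
  rw [this]
  calc -(z.im * α) ≤ |z.im * α| := neg_le_abs _
    _ = |z.im| * |α| := abs_mul _ _
    _ ≤ |z.im| * 1 := by gcongr
    _ ≤ B := by simpa using hB

lemma Kb_diff (b : ℝ) : Differentiable ℂ (Kb b) := by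
  intro z₀
  unfold Kb
  refine DifferentiableAt.const_mul ?_ _
  refine (intervalIntegral.hasDerivAt_integral_of_dominated_loc_of_deriv_le
    (F := fun z (α : ℝ) =>
      ((jF α / Real.cosh (b * α) : ℝ) : ℂ) * Complex.exp (Complex.I * z * α))
    (F' := fun z (α : ℝ) =>
      ((jF α / Real.cosh (b * α) : ℝ) : ℂ) * (Complex.exp (Complex.I * z * α) * (Complex.I * α)))
    (bound := fun _ => Real.exp (‖z₀‖ + 1))
    (Metric.ball_mem_nhds z₀ one_pos) ?_ ?_ ?_ ?_ ?_ ?_).2.differentiableAt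
  · exact Eventually.of_forall fun z => (integrand_cont b z).aestronglyMeasurable
  · exact (integrand_cont b z₀).intervalIntegrable _ _
  · exact ((Complex.continuous_ofReal.comp (w_cont b)).mul (by fun_prop)).aestronglyMeasurable
  · refine Eventually.of_forall fun α hα z hz => ?_
    have hz1 : |z.im| ≤ ‖z₀‖ + 1 := by
      refine (Complex.abs_im_le_norm z).trans ?_
      have := norm_sub_norm_le z z₀
      rw [mem_ball_iff_norm] at hz
      linarith
    have h1 := exp_norm_le z _ hz1 α hα
    have h2 := w_norm b α
    have h3 : ‖Complex.I * (α : ℂ)‖ ≤ 1 := by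
      rw [Set.uIoc_of_le (by norm_num)] at hα
      simpa using abs_le.2 ⟨hα.1.le, hα.2⟩
    rw [norm_mul, norm_mul]
    calc _ ≤ 1 * (Real.exp (‖z₀‖ + 1) * 1) := by gcongr
      _ = _ := by ring
  · exact intervalIntegrable_const
  · refine Eventually.of_forall fun α hα z hz => ?_
    refine HasDerivAt.const_mul _ (HasDerivAt.cexp ?_)
    have := ((hasDerivAt_id z).const_mul Complex.I).mul_const (α : ℂ)
    simpa using this

lemma Kb_bound (b : ℝ) (z : ℂ) (hz : |z.im| ≤ b) :
    ‖Kb b z‖ ≤ ‖(1 / (2 * Real.pi) : ℂ)‖ * (Real.exp b * 2) := by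
  unfold Kb
  rw [norm_mul]
  gcongr
  have := intervalIntegral.norm_integral_le_of_norm_le_const (a := (-1 : ℝ)) (b := 1)
    (C := Real.exp b) (f := fun α : ℝ =>
      ((jF α / Real.cosh (b * α) : ℝ) : ℂ) * Complex.exp (Complex.I * z * α)) ?_
  · refine this.trans (le_of_eq ?_)
    norm_num
  · intro α hα
    rw [norm_mul]
    calc _ ≤ 1 * Real.exp b := by
          gcongr
          · exact w_norm b α
          · exact exp_norm_le z b hz α hα
      _ = _ := one_mul _

lemma Kb_re (b : ℝ) (z : ℂ) : (Kb b z).re = 1 / (2 * Real.pi) *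
    ∫ α in (-1 : ℝ)..1, jF α / Real.cosh (b * α) * (Real.exp (-(z.im * α)) * Real.cos (z.re * α)) := by
  unfold Kb
  have h : (1 / (2 * Real.pi) : ℂ) = ((1 / (2 * Real.pi) : ℝ) : ℂ) := by push_cast; rfl
  rw [h, Complex.re_ofReal_mul]
  congr 1
  have := Complex.reCLM.intervalIntegral_comp_comm
    ((integrand_cont b z).intervalIntegrable (μ := volume) (-1) 1)
  simp only [Complex.reCLM_apply] at this
  rw [← this]
  congr 1
  ext α
  rw [Complex.re_ofReal_mul, Complex.exp_re]
  simp

lemma boundary (b : ℝ) (z : ℂ) (hz : z.im = b ∨ z.im = -b) : (Kb b z).re = 1 / (2 * Real.pi) *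
    ∫ α in (-1 : ℝ)..1, jF α * Real.cos (z.re * α) := by
  rw [Kb_re]
  congr 1
  set f := fun α : ℝ => jF α / Real.cosh (b * α) *
    (Real.exp (-(z.im * α)) * Real.cos (z.re * α)) with hf
  have hfc : Continuous f := (w_cont b).mul (by fun_prop)
  have h1 : ∫ α in (-1 : ℝ)..1, f (-α) = ∫ α in (-1 : ℝ)..1, f α := by
    rw [intervalIntegral.integral_comp_neg]; simp
  have h2 : (∫ α in (-1 : ℝ)..1, f α) + ∫ α in (-1 : ℝ)..1, f (-α)
      = 2 * ∫ α in (-1 : ℝ)..1, jF α * Real.cos (z.re * α) := by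
    have hfc' : Continuous fun α : ℝ => f (-α) := hfc.comp continuous_neg
    rw [← intervalIntegral.integral_add (hfc.intervalIntegrable _ _)
      (hfc'.intervalIntegrable _ _), ← intervalIntegral.integral_const_mul]
    congr 1
    ext α
    have hc := Real.cosh_pos (b * α)
    have he : Real.exp (-(z.im * α)) + Real.exp (z.im * α) = 2 * Real.cosh (b * α) := by
      rw [Real.cosh_eq]
      rcases hz with h | h <;> simp only [h, neg_mul, neg_neg] <;> ring
    simp only [hf, jF_neg, mul_neg, Real.cosh_neg, Real.cos_neg, neg_neg]
    have e : jF α / Real.cosh (b * α) * (2 * Real.cosh (b * α)) = 2 * jF α := by field_simp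
    linear_combination jF α / Real.cosh (b * α) * Real.cos (z.re * α) * he
      + Real.cos (z.re * α) * e
  linarith

lemma fejer_eq (x : ℝ) : ∫ α in (-1 : ℝ)..1, jF α * Real.cos (x * α)
    = 2 * ∫ α in (0 : ℝ)..1, (1 - α) * Real.cos (x * α) := by
  have hc : Continuous fun α : ℝ => jF α * Real.cos (x * α) := jF_cont.mul (by fun_prop)
  rw [← intervalIntegral.integral_add_adjacent_intervals (hc.intervalIntegrable (-1) 0)
    (hc.intervalIntegrable 0 1)]
  have h1 : ∫ α in (-1 : ℝ)..0, jF α * Real.cos (x * α)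
      = ∫ α in (0 : ℝ)..1, jF α * Real.cos (x * α) := by
    have := intervalIntegral.integral_comp_neg (a := (0 : ℝ)) (b := 1)
      (fun α : ℝ => jF α * Real.cos (x * α))
    simp only [jF_neg, mul_neg, Real.cos_neg, neg_zero] at this
    exact this.symm
  have h2 : ∫ α in (0 : ℝ)..1, jF α * Real.cos (x * α)
      = ∫ α in (0 : ℝ)..1, (1 - α) * Real.cos (x * α) := by
    apply intervalIntegral.integral_congr
    intro α hα
    rw [Set.uIcc_of_le (by norm_num)] at hα
    have : jF α = 1 - α := by
      unfold jF
      rw [abs_of_nonneg hα.1]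
      exact max_eq_left (by linarith [hα.2])
    simp only [this]
  rw [h1, h2]; ring

lemma fejer_zero : 0 < ∫ α in (-1 : ℝ)..1, jF α * Real.cos (0 * α) := by
  rw [fejer_eq]
  have : ∫ α in (0 : ℝ)..1, (1 - α) * Real.cos (0 * α) = 1 / 2 := by
    simp only [zero_mul, Real.cos_zero, mul_one]
    rw [intervalIntegral.integral_sub (by simp) (by simp)]
    simp
    norm_num
  rw [this]; norm_num

lemma fejer_nonneg (x : ℝ) : 0 ≤ ∫ α in (-1 : ℝ)..1, jF α * Real.cos (x * α) := by
  by_cases hx : x = 0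
  · subst hx; exact fejer_zero.le
  rw [fejer_eq]
  have : ∫ α in (0 : ℝ)..1, (1 - α) * Real.cos (x * α) = (1 - Real.cos x) / x ^ 2 := by
    rw [intervalIntegral.integral_eq_sub_of_hasDerivAt
      (f := fun α => (1 - α) * Real.sin (x * α) / x - Real.cos (x * α) / x ^ 2)]
    · simp; field_simp; ring
    · intro α _
      have hl : HasDerivAt (fun α : ℝ => x * α) x α := by
        simpa using (hasDerivAt_id α).const_mul x
      have h1 : HasDerivAt (fun α : ℝ => 1 - α) (-1) α := by
        simpa using (hasDerivAt_id α).const_sub 1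
      have := ((h1.mul hl.sin).div_const x).sub (hl.cos.div_const (x ^ 2))
      refine this.congr_deriv ?_
      field_simp
      ring
    · exact Continuous.intervalIntegrable (by fun_prop) _ _
  rw [this]
  have := Real.cos_le_one x
  have : 0 ≤ 1 - Real.cos x := by linarith
  positivity

/-- For `b > 0` and `|y| < b`, the Tsang kernel satisfies `Re K_b(x + iy) > 0`. -/
theorem Kb_re_pos (b : ℝ) (hb : 0 < b) (x y : ℝ) (hy : |y| < b) :
    0 < (Kb b (x + y * Complex.I)).re := by
  set f : ℂ → ℂ := fun z => Complex.exp (-Kb b z) with hf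
  have hfd : Differentiable ℂ f := (Kb_diff b).neg.cexp
  have hfn : ∀ z, ‖f z‖ = Real.exp (-(Kb b z).re) := fun z => by
    simp [hf, Complex.norm_exp]
  have hbd : ∀ z : ℂ, (z.im = b ∨ z.im = -b) → ‖f z‖ ≤ 1 := fun z hz => by
    rw [hfn, Real.exp_le_one_iff, boundary b z hz]
    have := fejer_nonneg z.re
    have : 0 ≤ 1 / (2 * Real.pi) * ∫ α in (-1 : ℝ)..1, jF α * Real.cos (z.re * α) := by
      positivity
    linarith
  set U : Set ℂ := Complex.im ⁻¹' Ioo (-b) b with hU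
  have hle : ∀ z ∈ U, ‖f z‖ ≤ 1 := by
    intro z hz
    refine PhragmenLindelof.horizontal_strip (a := -b) (b := b) hfd.diffContOnCl
      ⟨0, by apply div_pos Real.pi_pos; linarith,
        ‖(1 / (2 * Real.pi) : ℂ)‖ * (Real.exp b * 2), ?_⟩
      (fun z hz => hbd z (Or.inr hz)) (fun z hz => hbd z (Or.inl hz)) hz.1.le hz.2.le
    refine Asymptotics.IsBigO.of_bound 1 ?_
    refine Filter.Eventually.filter_mono inf_le_right ?_
    rw [Filter.eventually_principal]
    intro w hw
    have := Kb_bound b w (abs_le.2 ⟨hw.1.le, hw.2.le⟩)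
    rw [hfn, one_mul, Real.norm_eq_abs, Real.abs_exp]
    apply Real.exp_le_exp.2
    have h2 := (neg_le_abs _).trans ((Complex.abs_re_le_norm (Kb b w)))
    simp only [zero_mul, Real.exp_zero, mul_one]
    linarith
  set c : ℂ := x + y * Complex.I with hc
  have hcU : c ∈ U := by
    have : c.im = y := by simp [hc]
    rw [hU, Set.mem_preimage, this]
    exact abs_lt.1 hy
  have hc1 : 0 ≤ (Kb b c).re := by
    have := hle c hcU
    rw [hfn, Real.exp_le_one_iff] at this
    linarith
  refine lt_of_le_of_ne hc1 fun h0 => ?_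
  have hfc : ‖f c‖ = 1 := by rw [hfn, ← h0]; simp
  have hconv : IsPreconnected U :=
    ((convex_Ioo (-b) b).linear_preimage Complex.imLm).isPreconnected
  have hm : IsMaxOn (norm ∘ f) U c := fun z hz => by
    simpa [hfc] using hle z hz
  have key := Complex.eqOn_closure_of_isPreconnected_of_isMaxOn_norm hconv
    (isOpen_Ioo.preimage Complex.continuous_im) hfd.diffContOnCl hcU hm
  have hmem : (b * Complex.I : ℂ) ∈ closure U := by
    rw [hU, Complex.closure_preimage_im, closure_Ioo (by linarith)]
    simp [hb.le]
  have h3 := congrArg norm (key hmem)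
  rw [Function.const_apply, hfc, hfn, Real.exp_eq_one_iff, boundary b _ (Or.inl (by simp))] at h3
  have h4 : (b * Complex.I : ℂ).re = 0 := by simp
  rw [h4] at h3
  have := fejer_zero
  have : 0 < 1 / (2 * Real.pi) * ∫ α in (-1 : ℝ)..1, jF α * Real.cos (0 * α) := by
    have := Real.pi_pos
    positivity
  linarith
end
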